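/- Let $(X,\{f_n\})$ be a NADS with $h_{top}(X, \{f_n\}) > 0$. Then the induced system on the space of Borel probability measures satisfies $h_{top}(\mathcal{M}(X), \{f_n^*\}) = +\infty$. -/

import Mathlib

open Filter MeasureTheory

noncomputable section

def compSeq {X : Type*} (f : ℕ → X → X) : ℕ → X → X
  | 0 => id
  | n + 1 => f n ∘ compSeq f n

/-- `E` is an `(n, ε)`-separated set for the nonautonomous system `(X, f)`
with respect to the distance function `d`. -/
def IsSeparatedSet {X : Type*} (d : X → X → ℝ) (f : ℕ → X → X) (n : ℕ) (ε : ℝ)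
    (E : Set X) : Prop :=
  ∀ x ∈ E, ∀ y ∈ E, x ≠ y → ∃ j < n, ε < d (compSeq f j x) (compSeq f j y)

/-- `F` is an `(n, ε)`-spanning set for the nonautonomous system `(X, f)`. -/
def IsSpanningSet {X : Type*} (d : X → X → ℝ) (f : ℕ → X → X) (n : ℕ) (ε : ℝ)
    (F : Set X) : Prop :=
  ∀ x : X, ∃ y ∈ F, ∀ j < n, d (compSeq f j x) (compSeq f j y) < ε

/-- maximal cardinality of an `(n, ε)`-separated set. -/
def sepNum {X : Type*} (d : X → X → ℝ) (f : ℕ → X → X) (n : ℕ) (ε : ℝ) : ℕ :=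
  sSup {c | ∃ E : Finset X, IsSeparatedSet d f n ε ↑E ∧ E.card = c}

/-- minimal cardinality of an `(n, ε)`-spanning set. -/
def spanNum {X : Type*} (d : X → X → ℝ) (f : ℕ → X → X) (n : ℕ) (ε : ℝ) : ℕ :=
  sInf {c | ∃ F : Finset X, IsSpanningSet d f n ε ↑F ∧ F.card = c}

/-- Topological entropy of a nonautonomous dynamical system, via separated sets. -/
def nadsEntropy {X : Type*} (d : X → X → ℝ) (f : ℕ → X → X) : EReal :=
  ⨆ (ε : ℝ) (_ : 0 < ε),
    atTop.limsup fun n : ℕ => ((Real.log (sepNum d f n ε) / n : ℝ) : EReal)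

end

open scoped ENNReal

theorem aux_bdd {Y : Type*} [MetricSpace Y] [CompactSpace Y] (g : ℕ → Y → Y)
    (hg : ∀ n, Continuous (g n)) (n : ℕ) {ε : ℝ} (hε : 0 < ε) :
    BddAbove {c | ∃ E : Finset Y, IsSeparatedSet (fun x y : Y => dist x y) g n ε ↑E ∧
      E.card = c} := by
  have hc : ∀ j, Continuous (compSeq g j) := by
    intro j
    induction j with
    | zero => exact continuous_id
    | succ k ih => exact (hg k).comp ih
  let Φ : Y → (Fin n → Y) := fun y j => compSeq g j y
  have hΦ : UniformContinuous Φ :=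
    CompactSpace.uniformContinuous_of_continuous (continuous_pi fun j => hc j)
  obtain ⟨δ, hδ, hδ'⟩ := Metric.uniformContinuous_iff.1 hΦ ε hε
  obtain ⟨t, ht, hcov⟩ :=
    Metric.totallyBounded_iff.1 (isCompact_univ (X := Y)).totallyBounded (δ / 2) (half_pos hδ)
  refine ⟨ht.toFinset.card, ?_⟩
  rintro c ⟨E, hE, rfl⟩
  have : ∀ x : Y, ∃ y ∈ t, dist x y < δ / 2 := by
    intro x
    have := hcov (Set.mem_univ x)
    simpa using this
  choose p hp hp' using this
  refine Finset.card_le_card_of_injOn p (fun x _ => by simpa using hp x) ?_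
  intro x hx y hy hxy
  by_contra hne
  obtain ⟨j, hj, hlt⟩ := hE x hx y hy hne
  have h1 : dist x y < δ := by
    have h2 := dist_triangle_right x y (p x)
    have h3 := hp' x
    have h4 := hp' y
    rw [← hxy] at h4
    linarith
  have h5 := hδ' h1
  have h6 := dist_le_pi_dist (Φ x) (Φ y) ⟨j, hj⟩
  simp only [Φ] at h6 h5
  linarith

theorem aux_pow {X Y : Type*} [MetricSpace X] [CompactSpace X] [MetricSpace Y] [CompactSpace Y]
    (f : ℕ → X → X) (g : ℕ → Y → Y) (hg : ∀ n, Continuous (g n)) (N : ℕ)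
    (π : (Fin N → X) → Y) (hπ : Continuous π) (hinj : Function.Injective π)
    (heq : ∀ n x, π (fun i => f n (x i)) = g n (π x)) {ε : ℝ} (hε : 0 < ε) :
    ∃ δ > 0, ∀ n, 0 < sepNum (fun x y : X => dist x y) f n ε →
      (sepNum (fun x y : X => dist x y) f n ε) ^ N ≤ sepNum (fun x y : Y => dist x y) g n δ := by
  have hemb : IsUniformEmbedding π := by
    have hce := hπ.isClosedEmbedding hinj
    refine ⟨⟨?_⟩, hinj⟩
    have hu : (inferInstance : UniformSpace Y).comap π = (inferInstance : UniformSpace (Fin N → X)) :=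
      unique_uniformity_of_compact hce.isInducing.eq_induced.symm rfl
    exact congrArg (fun u => @uniformity _ u) hu
  obtain ⟨δ, hδ, hδ'⟩ := (Metric.isUniformEmbedding_iff.1 hemb).2.2 ε hε
  refine ⟨δ / 2, half_pos hδ, fun n hpos => ?_⟩
  have heq' : ∀ j x, π (fun i => compSeq f j (x i)) = compSeq g j (π x) := by
    intro j
    induction j with
    | zero => intro x; rfl
    | succ k ih =>
      intro x
      simp only [compSeq, Function.comp]
      rw [heq, ih]
  have hmem : sepNum (fun x y : X => dist x y) f n ε ∈
      {c | ∃ E : Finset X, IsSeparatedSet (fun x y : X => dist x y) f n ε ↑E ∧ E.card = c} := by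
    refine Nat.sSup_mem ⟨0, ∅, ?_, rfl⟩ ?_
    · intro x hx; simp at hx
    · by_contra hb
      have : sepNum (fun x y : X => dist x y) f n ε = 0 := Nat.sSup_of_not_bddAbove hb
      omega
  obtain ⟨E, hE, hcard⟩ := hmem
  refine le_csSup (aux_bdd g hg n (half_pos hδ)) ⟨(Fintype.piFinset fun _ : Fin N => E).map ⟨π, hinj⟩, ?_, ?_⟩
  · intro a ha b hb hab
    simp only [Finset.coe_map, Set.mem_image, Finset.mem_coe, Fintype.mem_piFinset,
      Function.Embedding.coeFn_mk] at ha hb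
    obtain ⟨x, hx, rfl⟩ := ha
    obtain ⟨y, hy, rfl⟩ := hb
    have hxy : x ≠ y := fun h => hab (by rw [h])
    obtain ⟨i, hi⟩ := Function.ne_iff.1 hxy
    obtain ⟨j, hj, hlt⟩ := hE (x i) (hx i) (y i) (hy i) hi
    refine ⟨j, hj, ?_⟩
    by_contra hcon
    push Not at hcon
    rw [← heq', ← heq'] at hcon
    have h1 := hδ' (lt_of_le_of_lt hcon (half_lt_self hδ))
    have h2 := dist_le_pi_dist (fun i => compSeq f j (x i)) (fun i => compSeq f j (y i)) i
    simp only at h2 hlt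
    linarith
  · simp [hcard]

theorem aux_top {X Y : Type*} [MetricSpace X] [CompactSpace X] [MetricSpace Y] [CompactSpace Y]
    (f : ℕ → X → X) (g : ℕ → Y → Y) (hg : ∀ n, Continuous (g n))
    (h : 0 < nadsEntropy (fun x y : X => dist x y) f)
    (hex : ∀ N : ℕ, ∃ π : (Fin (N + 1) → X) → Y, Continuous π ∧ Function.Injective π ∧
      ∀ n x, π (fun i => f n (x i)) = g n (π x)) :
    nadsEntropy (fun x y : Y => dist x y) g = ⊤ := by
  unfold nadsEntropy at h
  simp only [lt_iSup_iff] at h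
  obtain ⟨ε, hε, h⟩ := h
  obtain ⟨c, hc0, hc⟩ := EReal.lt_iff_exists_real_btwn.1 h
  have hc0' : 0 < c := by exact_mod_cast hc0
  have hfreq := frequently_lt_of_lt_limsup (by isBoundedDefault) hc
  rw [EReal.eq_top_iff_forall_lt]
  intro y
  obtain ⟨N, hN⟩ := exists_nat_gt (y / c)
  obtain ⟨π, h1, h2, h3⟩ := hex N
  obtain ⟨δ, hδ, hδ'⟩ := aux_pow f g hg (N + 1) π h1 h2 h3 hε
  have key : (((N + 1) * c : ℝ) : EReal) ≤ atTop.limsup fun n : ℕ =>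
      ((Real.log (sepNum (fun x y : Y => dist x y) g n δ) / n : ℝ) : EReal) := by
    refine le_limsup_of_frequently_le (hfreq.mono fun n hn => ?_) (by isBoundedDefault)
    have hn' : c < Real.log (sepNum (fun x y : X => dist x y) f n ε) / n := by exact_mod_cast hn
    have hs : 0 < sepNum (fun x y : X => dist x y) f n ε := by
      by_contra h0
      have : sepNum (fun x y : X => dist x y) f n ε = 0 := by omega
      rw [this] at hn'
      simp at hn'
      linarith
    have hle := hδ' n hs
    have hlog : (N + 1) * Real.log (sepNum (fun x y : X => dist x y) f n ε) ≤
        Real.log (sepNum (fun x y : Y => dist x y) g n δ) := by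
      have : (((sepNum (fun x y : X => dist x y) f n ε) ^ (N + 1) : ℕ) : ℝ) ≤
        (sepNum (fun x y : Y => dist x y) g n δ : ℝ) := by exact_mod_cast hle
      have h5 := Real.log_le_log (by positivity) this
      rw [Nat.cast_pow, Real.log_pow] at h5
      exact_mod_cast h5
    have : (N + 1) * c ≤ Real.log (sepNum (fun x y : Y => dist x y) g n δ) / n := by
      calc (N + 1) * c ≤ (N + 1) * (Real.log (sepNum (fun x y : X => dist x y) f n ε) / n) := by
            gcongr
        _ = ((N + 1) * Real.log (sepNum (fun x y : X => dist x y) f n ε)) / n := by ring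
        _ ≤ _ := by gcongr
    exact_mod_cast this
  have hy : (y : EReal) < (((N + 1) * c : ℝ) : EReal) := by
    rw [div_lt_iff₀ hc0'] at hN
    have : y < (N + 1) * c := by nlinarith
    exact_mod_cast this
  refine lt_of_lt_of_le (lt_of_lt_of_le hy key) ?_
  unfold nadsEntropy
  exact le_iSup₂_of_le δ hδ le_rfl

theorem aux_embed {X : Type*} [MetricSpace X] [CompactSpace X]
    [MeasurableSpace X] [BorelSpace X]
    (f : ℕ → X → X) (hf : ∀ n, Continuous (f n)) (N : ℕ) :
    ∃ π : (Fin (N + 1) → X) → ProbabilityMeasure X, Continuous π ∧ Function.Injective π ∧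
      ∀ n x, π (fun i => f n (x i)) = (π x).map ((hf n).aemeasurable) := by
  classical
  have hS0 : (∑ i : Fin (N + 1), (2 : ℝ≥0∞) ^ (i : ℕ)) ≠ 0 := by
    rw [Fin.sum_univ_succ]; simp
  have hS1 : (∑ i : Fin (N + 1), (2 : ℝ≥0∞) ^ (i : ℕ)) ≠ ⊤ := by
    simp [ENNReal.sum_eq_top]
  set c : ℝ≥0∞ := (∑ i : Fin (N + 1), (2 : ℝ≥0∞) ^ (i : ℕ))⁻¹ with hc
  have hc0 : c ≠ 0 := ENNReal.inv_ne_zero.2 hS1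
  have hct : c ≠ ⊤ := ENNReal.inv_ne_top.2 hS0
  let M : (Fin (N + 1) → X) → Measure X := fun x =>
    c • ∑ i : Fin (N + 1), ((2 : ℝ≥0∞) ^ (i : ℕ)) • Measure.dirac (x i)
  have hM : ∀ x, IsProbabilityMeasure (M x) := fun x => ⟨by
    simp only [M, Measure.smul_apply, Measure.finsetSum_apply, measure_univ, smul_eq_mul, mul_one]
    exact ENNReal.inv_mul_cancel hS0 hS1⟩
  let P : (Fin (N + 1) → X) → ProbabilityMeasure X := fun x => ⟨M x, hM x⟩
  refine ⟨P, ?_, ?_, ?_⟩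
  · rw [ProbabilityMeasure.continuous_iff_forall_continuous_integral]
    intro φ
    have : ∀ x, ∫ y, φ y ∂(M x) = c.toReal * ∑ i : Fin (N + 1), 2 ^ (i : ℕ) * φ (x i) := by
      intro x
      simp only [M]
      rw [integral_smul_measure, integral_finsetSum_measure]
      · simp [integral_smul_measure]
      · intro i _
        exact ((integrable_dirac (by simp)).smul_measure (by simp))
    simp only [P, ProbabilityMeasure.coe_mk, this]
    fun_prop
  · intro x y hxy
    have hxy' : M x = M y := congrArg ProbabilityMeasure.toMeasure hxy
    funext i
    have key : ∀ z : Fin (N + 1) → X, M z {x i} =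
        c * ((∑ k ∈ (Finset.univ.filter fun k => z k = x i).map Fin.valEmbedding, 2 ^ k : ℕ) :
          ℝ≥0∞) := by
      intro z
      simp [M, Measure.finsetSum_apply, Finset.sum_filter, Set.indicator_apply]
    have h1 := key x
    rw [hxy', key y, ENNReal.mul_right_inj hc0 hct, Nat.cast_inj] at h1
    have h2 := Finset.map_injective _ (Finset.geomSum_injective le_rfl h1)
    have h3 : i ∈ Finset.univ.filter fun k => x k = x i := by simp
    rw [← h2] at h3
    simpa using (Finset.mem_filter.1 h3).2.symm
  · intro n x
    apply Subtype.ext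
    change M (fun i => f n (x i)) = (M x).map (f n)
    have hmeas := (hf n).measurable
    simp only [M]
    rw [Measure.map_smul, ← Measure.mapₗ_apply_of_measurable hmeas, map_sum]
    simp [Measure.mapₗ_apply_of_measurable hmeas, hmeas]

theorem induced_entropy_top {X : Type*} [MetricSpace X] [CompactSpace X]
    [MeasurableSpace X] [BorelSpace X]
    (f : ℕ → X → X) (hf : ∀ n, Continuous (f n))
    (h : 0 < nadsEntropy (fun x y : X => dist x y) f)
    (m : MetricSpace (ProbabilityMeasure X))
    (hm : m.toUniformSpace.toTopologicalSpace =
      (inferInstance : TopologicalSpace (ProbabilityMeasure X))) :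
    nadsEntropy (fun μ ν : ProbabilityMeasure X => @dist _ m.toDist μ ν)
      (fun n μ => μ.map ((hf n).aemeasurable)) = ⊤ := by
  have hcpt : @CompactSpace (ProbabilityMeasure X) m.toUniformSpace.toTopologicalSpace := by
    rw [hm]; infer_instance
  refine @aux_top X (ProbabilityMeasure X) _ _ m hcpt f _ ?_ h ?_
  · intro n
    rw [hm]
    exact ProbabilityMeasure.continuous_map (hf n)
  · intro N
    rw [hm]
    exact aux_embed f hf N
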